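/- Let s ≥ 1, let 0 ≤ q ≤ s, and set n = T_s + q. Let λ be a partition of n with deg(λ) = Δ_n. Then: (1) if L is a distinct part size of λ occurring with multiplicity at least 2, then L ≤ q; (2) if L ≥ 2 is a distinct part size of λ such that L−1 is not a part size of λ, then the number of distinct part sizes of λ that are ≥ L is at most q. -/

import Mathlib

namespace PartitionDegree

/-- The `m`-th triangular number. -/
def T (m : ℕ) : ℕ := m * (m + 1) / 2

/-- The number of distinct part sizes of a partition. -/
def supp {n : ℕ} (lam : n.Partition) : ℕ := lam.parts.toFinset.card

/-- The gap-bonus count: distinct part sizes `L ≥ 2` such that `L - 1` is not a part size. -/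
def gapBonus {n : ℕ} (lam : n.Partition) : ℕ :=
  (lam.parts.toFinset.filter (fun L => 2 ≤ L ∧ (L - 1) ∉ lam.parts)).card

/-- The multiplicity-bonus count: distinct part sizes occurring with multiplicity at least 2. -/
def multBonus {n : ℕ} (lam : n.Partition) : ℕ :=
  (lam.parts.toFinset.filter (fun L => 2 ≤ lam.parts.count L)).card

/-- The degree of a partition in the partition graph. -/
def deg {n : ℕ} (lam : n.Partition) : ℕ :=
  supp lam * (supp lam - 1) + gapBonus lam + multBonus lam

/-- The maximal degree over all partitions of `n`. -/
def maxDeg (n : ℕ) : ℕ := Finset.univ.sup (fun lam : n.Partition => deg lam)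

/-- `ρ(q)`: the maximum of `a + b` over pairs with `T a + T b ≤ q`. -/
noncomputable def rho (q : ℕ) : ℕ := sSup {c : ℕ | ∃ a b : ℕ, c = a + b ∧ T a + T b ≤ q}

/-- `mu` is the conjugate of `lam`: for each `k ≥ 1`, the multiplicity of `k` in `mu`
equals (number of parts of `lam` that are `≥ k`) minus (number of parts `≥ k + 1`). -/
def IsConjugate {n : ℕ} (lam mu : n.Partition) : Prop :=
  ∀ k : ℕ, 1 ≤ k →
    mu.parts.count k =
      Multiset.countP (fun p => k ≤ p) lam.parts -
        Multiset.countP (fun p => k + 1 ≤ p) lam.parts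

/-!
Write `r` for the number of distinct part sizes of a partition `λ` of `n`. Being distinct and
positive, they sum to at least `T r`. A repeated part `L` adds another `L` to this bound; a gap
below `L` adds the number of part sizes `≥ L`, since each of them can be lowered by one and the
sizes stay distinct and positive. Both conclusions follow as soon as `T s ≤ n` forces `s ≤ r`,
that is, as soon as a maximizer satisfies `n < T (r + 1)`.

Suppose instead that `T (r + 1) ≤ n`. Each bonus is at most `r`, so `deg λ ≤ r (r + 1)`, whereas
`1 + 2 + ⋯ + (r + 1)`, padded with ones, already has degree at least `r (r + 1)`, and more if some
padding is present. By maximality `n = T (r + 1)` and both bonuses of `λ` are equal to `r`: every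
part size is repeated and at least `2`, so that `n ≥ 2 (T r + r) = r (r + 3)`. This exceeds
`T (r + 1)` unless `r = 0`, which is impossible for a partition of a positive number.
-/

lemma two_mul_T (m : ℕ) : 2 * T m = m * (m + 1) :=
  Nat.mul_div_cancel' (Nat.even_mul_succ_self m).two_dvd

lemma T_succ (m : ℕ) : T (m + 1) = T m + (m + 1) := by
  linarith [two_mul_T m, two_mul_T (m + 1)]

lemma T_mono : Monotone T :=
  monotone_nat_of_le_succ fun m => (T_succ m).symm ▸ Nat.le_add_right _ _

lemma sum_Icc_one_eq_T (s : ℕ) : ∑ x ∈ Finset.Icc 1 s, x = T s := by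
  induction s with
  | zero => rfl
  | succ s ih => rw [Finset.sum_Icc_succ_top (by omega), ih, T_succ]

lemma mul_pred_add_two_mul (r : ℕ) : r * (r - 1) + 2 * r = r * (r + 1) := by
  cases r with
  | zero => rfl
  | succ r => rw [Nat.add_sub_cancel]; ring

section FinsetSum

variable {S : Finset ℕ}

lemma T_card_le_sum (hS : ∀ x ∈ S, 0 < x) : T S.card ≤ ∑ x ∈ S, x := by
  induction S using Finset.induction_on_max with
  | empty => rfl
  | insert a S ha ih =>
    have hS' : ∀ x ∈ S, 0 < x := fun x hx => hS x (Finset.mem_insert_of_mem hx)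
    have card_lt : S.card < a := by
      have hsub : S ⊆ Finset.Ioo 0 a := fun x hx => Finset.mem_Ioo.2 ⟨hS' x hx, ha x hx⟩
      have hcard := Finset.card_le_card hsub
      have ha_pos := hS a (Finset.mem_insert_self a S)
      rw [Nat.card_Ioo] at hcard
      omega
    have haS : a ∉ S := fun h => (ha a h).false
    rw [Finset.card_insert_of_notMem haS, Finset.sum_insert haS, T_succ, add_comm a]
    exact add_le_add (ih hS') card_lt

lemma T_card_add_card_filter_le_sum (hS : ∀ x ∈ S, 0 < x) {L : ℕ} (hL : 2 ≤ L)
    (hgap : L - 1 ∉ S) : T S.card + (S.filter (fun x => L ≤ x)).card ≤ ∑ x ∈ S, x := by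
  let lower : ℕ → ℕ := fun x => if L ≤ x then x - 1 else x
  have lower_add (x : ℕ) : lower x + (if L ≤ x then 1 else 0) = x := by
    simp only [lower]
    split_ifs <;> omega
  have lower_injOn : Set.InjOn lower S := by
    intro x hx y hy hxy
    have hx_ne : x ≠ L - 1 := ne_of_mem_of_not_mem hx hgap
    have hy_ne : y ≠ L - 1 := ne_of_mem_of_not_mem hy hgap
    simp only [lower] at hxy
    split_ifs at hxy <;> omega
  have lower_pos : ∀ y ∈ S.image lower, 0 < y := by
    refine Finset.forall_mem_image.2 fun x hx => ?_
    have hx_pos := hS x hx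
    simp only [lower]
    split_ifs <;> omega
  calc T S.card + (S.filter (fun x => L ≤ x)).card
      = T (S.image lower).card + ∑ x ∈ S, (if L ≤ x then 1 else 0) := by
        rw [Finset.card_image_of_injOn lower_injOn, Finset.card_filter]
    _ ≤ ∑ x ∈ S.image lower, x + ∑ x ∈ S, (if L ≤ x then 1 else 0) := by
        gcongr
        exact T_card_le_sum lower_pos
    _ = ∑ x ∈ S, x := by
        rw [Finset.sum_image lower_injOn, ← Finset.sum_add_distrib]
        exact Finset.sum_congr rfl fun x _ => lower_add x

end FinsetSum

section PartSizes

variable {n : ℕ} (lam : n.Partition)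

lemma pos_of_mem_toFinset : ∀ x ∈ lam.parts.toFinset, 0 < x :=
  fun _ hx => lam.parts_pos (Multiset.mem_toFinset.1 hx)

lemma supp_pos (hn : 0 < n) : 0 < supp lam := by
  refine Finset.card_pos.2 (Multiset.toFinset_nonempty.2 fun hparts => hn.ne ?_)
  rw [← lam.parts_sum, hparts, Multiset.sum_zero]

variable {lam}

lemma sum_le_of_le_parts {m : Multiset ℕ} (h : m ≤ lam.parts) : m.sum ≤ n := by
  obtain ⟨rest, hrest⟩ := Multiset.le_iff_exists_add.1 h
  rw [← lam.parts_sum, hrest, Multiset.sum_add]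
  exact Nat.le_add_right _ _

lemma mul_sum_toFinset_le {k : ℕ} (h : ∀ L ∈ lam.parts, k ≤ lam.parts.count L) :
    k * ∑ x ∈ lam.parts.toFinset, x ≤ n := by
  have copies_le : k • lam.parts.dedup ≤ lam.parts := by
    refine Multiset.le_iff_count.2 fun L => ?_
    rw [Multiset.count_nsmul, Multiset.count_dedup]
    split_ifs with hL
    · simpa only [mul_one] using h L hL
    · exact Nat.zero_le _
  simpa only [Multiset.sum_nsmul, smul_eq_mul, ← Multiset.toFinset_val, Finset.sum_val, id]
    using sum_le_of_le_parts copies_le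

lemma sum_toFinset_add_le {L : ℕ} (hL : 2 ≤ lam.parts.count L) :
    ∑ x ∈ lam.parts.toFinset, x + L ≤ n := by
  have cons_dedup_le : L ::ₘ lam.parts.dedup ≤ lam.parts := by
    refine Multiset.le_iff_count.2 fun x => ?_
    have hx : x ∈ lam.parts → 0 < lam.parts.count x := Multiset.count_pos.2
    rw [Multiset.count_cons, Multiset.count_dedup]
    split_ifs <;> grind
  simpa only [Multiset.sum_cons, ← Multiset.toFinset_val, Finset.sum_val, id, add_comm L]
    using sum_le_of_le_parts cons_dedup_le

lemma T_supp_add_le_of_two_le_count {L : ℕ} (hL : 2 ≤ lam.parts.count L) :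
    T (supp lam) + L ≤ n :=
  (Nat.add_le_add_right (T_card_le_sum (pos_of_mem_toFinset lam)) L).trans
    (sum_toFinset_add_le hL)

lemma T_supp_add_card_filter_le_of_gap {L : ℕ} (hL : 2 ≤ L) (hgap : L - 1 ∉ lam.parts) :
    T (supp lam) + (lam.parts.toFinset.filter (fun p => L ≤ p)).card ≤ n :=
  calc T (supp lam) + (lam.parts.toFinset.filter (fun p => L ≤ p)).card
      ≤ ∑ x ∈ lam.parts.toFinset, x :=
        T_card_add_card_filter_le_sum (pos_of_mem_toFinset lam) hL (mt Multiset.mem_toFinset.1 hgap)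
    _ ≤ n := by
        simpa only [one_mul] using mul_sum_toFinset_le fun _ => Multiset.one_le_count_iff_mem.2

end PartSizes

section Degree

variable {n : ℕ} (lam : n.Partition)

lemma gapBonus_le_supp : gapBonus lam ≤ supp lam :=
  Finset.card_filter_le _ _

lemma multBonus_le_supp : multBonus lam ≤ supp lam :=
  Finset.card_filter_le _ _

lemma deg_le_supp_mul_succ : deg lam ≤ supp lam * (supp lam + 1) := by
  have hgap := gapBonus_le_supp lam
  have hmult := multBonus_le_supp lam
  rw [deg, ← mul_pred_add_two_mul]
  omega

lemma deg_le_maxDeg : deg lam ≤ maxDeg n :=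
  Finset.le_sup (Finset.mem_univ lam)

variable {lam}

lemma T_supp_add_supp_le_sum_of_gapBonus_eq (h : gapBonus lam = supp lam) :
    T (supp lam) + supp lam ≤ ∑ x ∈ lam.parts.toFinset, x := by
  have two_le : ∀ x ∈ lam.parts.toFinset, 2 ≤ x := fun x hx => (Finset.filter_card_eq h x hx).1
  have one_notMem : 2 - 1 ∉ lam.parts.toFinset := fun h1 => absurd (two_le _ h1) (by norm_num)
  simpa only [supp, Finset.filter_true_of_mem two_le]
    using T_card_add_card_filter_le_sum (pos_of_mem_toFinset lam) le_rfl one_notMem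

lemma two_mul_sum_toFinset_le_of_multBonus_eq (h : multBonus lam = supp lam) :
    2 * ∑ x ∈ lam.parts.toFinset, x ≤ n :=
  mul_sum_toFinset_le fun L hL => Finset.filter_card_eq h L (Multiset.mem_toFinset.2 hL)

lemma supp_mul_supp_add_three_le (h : supp lam * (supp lam + 1) ≤ deg lam) :
    supp lam * (supp lam + 3) ≤ n := by
  have gap_le := gapBonus_le_supp lam
  have mult_le := multBonus_le_supp lam
  rw [deg, ← mul_pred_add_two_mul] at h
  calc supp lam * (supp lam + 3)
      = 2 * (T (supp lam) + supp lam) := by linarith [two_mul_T (supp lam)]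
    _ ≤ 2 * ∑ x ∈ lam.parts.toFinset, x := by
        gcongr
        exact T_supp_add_supp_le_sum_of_gapBonus_eq (by omega)
    _ ≤ n := two_mul_sum_toFinset_le_of_multBonus_eq (by omega)

end Degree

section PaddedStaircase

/-- The partition `1 + 2 + ⋯ + s` with `q` additional parts equal to `1`; its degree bounds the
maximal degree from below. -/
def paddedStaircase (s q : ℕ) : (T s + q).Partition where
  parts := (Finset.Icc 1 s).val + Multiset.replicate q 1
  parts_pos {i} hi := by
    rcases Multiset.mem_add.1 hi with hi | hi
    · exact (Finset.mem_Icc.1 (Finset.mem_def.2 hi)).1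
    · exact (Multiset.eq_of_mem_replicate hi).symm ▸ one_pos
  parts_sum := by
    simp only [Multiset.sum_add, Finset.sum_val, id, sum_Icc_one_eq_T, Multiset.sum_replicate,
      smul_eq_mul, mul_one]

variable (s q : ℕ)

lemma toFinset_paddedStaircase_succ :
    (paddedStaircase (s + 1) q).parts.toFinset = Finset.Icc 1 (s + 1) := by
  ext x
  simp only [paddedStaircase, Multiset.mem_toFinset, Multiset.mem_add, Finset.mem_val,
    Multiset.mem_replicate, Finset.mem_Icc]
  omega

lemma le_deg_paddedStaircase_succ :
    s * (s + 1) + multBonus (paddedStaircase (s + 1) q) ≤ deg (paddedStaircase (s + 1) q) := by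
  have supp_eq : supp (paddedStaircase (s + 1) q) = s + 1 := by
    rw [supp, toFinset_paddedStaircase_succ, Nat.card_Icc, Nat.add_sub_cancel]
  rw [deg, supp_eq, Nat.add_sub_cancel, mul_comm s]
  omega

lemma multBonus_paddedStaircase_pos : 0 < multBonus (paddedStaircase (s + 1) (q + 1)) := by
  have one_mem : 1 ∈ Finset.Icc 1 (s + 1) := Finset.mem_Icc.2 ⟨le_rfl, by omega⟩
  refine Finset.card_pos.2 ⟨1, Finset.mem_filter.2 ⟨?_, ?_⟩⟩
  · rwa [toFinset_paddedStaircase_succ]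
  · rw [paddedStaircase, Multiset.count_add, Multiset.count_replicate_self]
    have one_le_count := Multiset.one_le_count_iff_mem.2 (Finset.mem_def.1 one_mem)
    omega

variable {s} {n : ℕ}

lemma mul_succ_le_maxDeg (h : T (s + 1) ≤ n) : s * (s + 1) ≤ maxDeg n := by
  obtain ⟨q, rfl⟩ := Nat.exists_eq_add_of_le h
  exact (Nat.le_of_add_right_le (le_deg_paddedStaircase_succ s q)).trans (deg_le_maxDeg _)

lemma mul_succ_lt_maxDeg (h : T (s + 1) < n) : s * (s + 1) < maxDeg n := by
  obtain ⟨q, rfl⟩ := Nat.exists_eq_add_of_lt h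
  calc s * (s + 1)
      < s * (s + 1) + multBonus (paddedStaircase (s + 1) (q + 1)) :=
        Nat.lt_add_of_pos_right (multBonus_paddedStaircase_pos s q)
    _ ≤ deg (paddedStaircase (s + 1) (q + 1)) := le_deg_paddedStaircase_succ s (q + 1)
    _ ≤ maxDeg (T (s + 1) + q + 1) := deg_le_maxDeg _

end PaddedStaircase

section Maximizer

variable {n : ℕ} {lam : n.Partition}

lemma lt_T_supp_succ_of_deg_eq_maxDeg (hmax : deg lam = maxDeg n) : n < T (supp lam + 1) := by
  by_contra! T_le
  have n_eq : n = T (supp lam + 1) := by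
    refine T_le.antisymm' (not_lt.1 fun T_lt => ?_)
    exact (mul_succ_lt_maxDeg T_lt).not_ge (hmax ▸ deg_le_supp_mul_succ lam)
  have n_ge : supp lam * (supp lam + 3) ≤ n :=
    supp_mul_supp_add_three_le (hmax ▸ mul_succ_le_maxDeg T_le)
  have two_mul_n : 2 * n = (supp lam + 1) * (supp lam + 2) :=
    (congrArg (2 * ·) n_eq).trans (two_mul_T (supp lam + 1))
  have hsupp : 0 < supp lam := supp_pos lam (by nlinarith)
  nlinarith

lemma le_supp_of_T_le {s : ℕ} (hs : T s ≤ n) (hmax : deg lam = maxDeg n) : s ≤ supp lam :=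
  Nat.lt_succ_iff.1 (T_mono.reflect_lt (hs.trans_lt (lt_T_supp_succ_of_deg_eq_maxDeg hmax)))

end Maximizer

theorem localization_general {n s : ℕ} (hs : T s ≤ n) (lam : n.Partition)
    (hmax : deg lam = maxDeg n) :
    (∀ L : ℕ, 2 ≤ lam.parts.count L → T s + L ≤ n) ∧
      (∀ L : ℕ, 2 ≤ L → (L - 1) ∉ lam.parts →
        T s + (lam.parts.toFinset.filter (fun p => L ≤ p)).card ≤ n) := by
  have T_le : T s ≤ T (supp lam) := T_mono (le_supp_of_T_le hs hmax)
  exact ⟨fun L hL => (Nat.add_le_add_right T_le L).trans (T_supp_add_le_of_two_le_count hL),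
    fun L hL hgap =>
      (Nat.add_le_add_right T_le _).trans (T_supp_add_card_filter_le_of_gap hL hgap)⟩

/-- localization of active coordinates in a maximizer of `T s + q`:
(1) every part size with multiplicity at least `2` is at most `q`;
(2) for every part size `L ≥ 2` with `L - 1` not a part size, the number of distinct
part sizes `≥ L` is at most `q`. -/
theorem localization (s q : ℕ) (hs : 1 ≤ s) (hqs : q ≤ s)
    (lam : (T s + q).Partition) (hmax : deg lam = maxDeg (T s + q)) :
    (∀ L : ℕ, L ∈ lam.parts → 2 ≤ lam.parts.count L → L ≤ q) ∧
      (∀ L : ℕ, 2 ≤ L → L ∈ lam.parts → (L - 1) ∉ lam.parts →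
        (lam.parts.toFinset.filter (fun p => L ≤ p)).card ≤ q) := by
  obtain ⟨repeated, gap⟩ := localization_general (Nat.le_add_right (T s) q) lam hmax
  exact ⟨fun L _ hL => Nat.add_le_add_iff_left.1 (repeated L hL),
    fun L hL _ hgap => Nat.add_le_add_iff_left.1 (gap L hL hgap)⟩

end PartitionDegree
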